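/- arXiv:2403.00390 — 8 statements merged into one kernel-verified Lean document; each statement's English description precedes it below -/
import Mathlib

section
/- Let a_1, …, a_k and T be even integers. Let A₁ be the DWA over Σ = {0,1} with states q_0, …, q_{k+1}, initial state q_0, transitions δ(q_i, x) = q_{i+1} for i < k and δ(q_k, x) = δ(q_{k+1}, x) = q_{k+1} for both letters x, and weights c(q_i, 1) = a_{i+1} and c(q_i, 0) = 0 for i < k, c(q_k, x) = −T for both letters, and c(q_{k+1}, x) = 0 for both letters. Let A₂ be identical to A₁ except that c(q_k, x) = −T + 1 for both letters. Then the following are equivalent: (1) for every nonempty word w over {0,1}, A₁(w) > 0 if and only if A₂(w) > 0; (2) there is no subset I ⊆ {1, …, k} with Σ_{i∈I} a_i = T. -/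
/-- A deterministic weighted automaton (DWA) over alphabet `A` with state space `Q`. -/
structure DWA (A : Type) (Q : Type) where
  init : Q
  δ : Q → A → Q
  c : Q → A → ℤ

/-- The extended transition function `δ̂`. -/
def DWA.run {A Q : Type} (M : DWA A Q) (q : Q) (w : List A) : Q :=
  w.foldl M.δ q

/-- The accumulated weight of the run on `w` starting in state `q`. -/
def DWA.valFrom {A Q : Type} (M : DWA A Q) : Q → List A → ℤ
  | _, [] => 0
  | q, x :: w => M.c q x + M.valFrom (M.δ q x) w

/-- The value `A(w)` of a word: the sum of the weights along the run from the initial state. -/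
def DWA.val {A Q : Type} (M : DWA A Q) (w : List A) : ℤ :=
  M.valFrom M.init w

theorem redA_valFrom (k : ℕ) (a : Fin k → ℤ) (t : ℤ) (M : DWA Bool (Fin (k + 2)))
    (hδ : ∀ j x, (M.δ j x).val = min (j.val + 1) (k + 1))
    (hc : ∀ j x, M.c j x = if h : j.val < k then (if x then a ⟨j.val, h⟩ else 0)
      else if j.val = k then t else 0)
    (w : List Bool) (q : Fin (k + 2)) :
    M.valFrom q w =
      (∑ i : Fin k, if q.val ≤ i.val ∧ w[i.val - q.val]? = some true then a i else 0) +
        (if q.val ≤ k ∧ k - q.val < w.length then t else 0) := by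
  induction w generalizing q with
  | nil => simp [DWA.valFrom]
  | cons x w ih =>
    rw [DWA.valFrom, ih, hδ, hc]
    obtain ⟨q, hq⟩ := q
    simp only [List.length_cons]
    by_cases h1 : q < k
    · have hm : min (q + 1) (k + 1) = q + 1 := by omega
      have hs : ∀ i : Fin k,
          (if q ≤ i.val ∧ (x :: w)[i.val - q]? = some true then a i else 0) =
          (if i = ⟨q, h1⟩ then (if x then a ⟨q, h1⟩ else 0) else 0) +
          (if q + 1 ≤ i.val ∧ w[i.val - (q + 1)]? = some true then a i else 0) := by
        intro i
        rcases lt_trichotomy i.val q with h | h | h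
        · have : i ≠ ⟨q, h1⟩ := by intro e; simp [e] at h
          simp [this, show ¬ q ≤ i.val by omega, show ¬ q + 1 ≤ i.val by omega]
        · have : i = ⟨q, h1⟩ := Fin.ext h
          subst this
          simp
        · have h2 : i ≠ ⟨q, h1⟩ := by intro e; simp [e] at h
          have h3 : i.val - q = (i.val - (q + 1)) + 1 := by omega
          rw [h3]
          simp [h2, show q ≤ i.val by omega, show q + 1 ≤ i.val by omega]
      simp only [hs, Finset.sum_add_distrib, hm, h1, dif_pos]
      have h4 : (q + 1 ≤ k ∧ k - (q + 1) < w.length) ↔ (q ≤ k ∧ k - q < w.length + 1) := by omega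
      simp only [h4]
      simp [add_assoc]
    · have hm : min (q + 1) (k + 1) = k + 1 := by omega
      have e1 : ∀ i : Fin k, ¬ q ≤ i.val := fun i => by omega
      have e2 : ∀ i : Fin k, ¬ k + 1 ≤ i.val := fun i => by omega
      simp only [hm, e1, e2, h1, false_and, if_false, dif_neg, not_false_eq_true]
      by_cases h5 : q = k
      · simp [h5]
      · simp [h5, show ¬ q ≤ k by omega]

theorem redA_val (k : ℕ) (a : Fin k → ℤ) (t : ℤ) (M : DWA Bool (Fin (k + 2)))
    (hδ : ∀ j x, (M.δ j x).val = min (j.val + 1) (k + 1))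
    (hc : ∀ j x, M.c j x = if h : j.val < k then (if x then a ⟨j.val, h⟩ else 0)
      else if j.val = k then t else 0)
    (h0 : M.init.val = 0) (w : List Bool) :
    M.val w =
      (∑ i : Fin k, if w[i.val]? = some true then a i else 0) +
        (if k < w.length then t else 0) := by
  rw [DWA.val, redA_valFrom k a t M hδ hc]
  simp [h0]

/-- correctness of the reduction from subset sum to (in)equivalence of binary
PODWA. The letters `0, 1` are modelled by `false, true`; state `q_j` is `(⟨j, _⟩ : Fin (k+2))`. -/
theorem subset_sum_reduction_correct (k : ℕ) (a : Fin k → ℤ) (T : ℤ)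
    (ha : ∀ i, Even (a i)) (hT : Even T) :
    let δ : Fin (k + 2) → Bool → Fin (k + 2) := fun j _ => ⟨min (j.val + 1) (k + 1), by omega⟩
    let c₁ : Fin (k + 2) → Bool → ℤ := fun j x =>
      if h : j.val < k then (if x then a ⟨j.val, h⟩ else 0)
      else if j.val = k then -T else 0
    let c₂ : Fin (k + 2) → Bool → ℤ := fun j x =>
      if h : j.val < k then (if x then a ⟨j.val, h⟩ else 0)
      else if j.val = k then -T + 1 else 0
    let A₁ : DWA Bool (Fin (k + 2)) := ⟨⟨0, by omega⟩, δ, c₁⟩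
    let A₂ : DWA Bool (Fin (k + 2)) := ⟨⟨0, by omega⟩, δ, c₂⟩
    ((∀ w : List Bool, w ≠ [] → (0 < A₁.val w ↔ 0 < A₂.val w)) ↔
      ¬ ∃ I : Finset (Fin k), ∑ i ∈ I, a i = T) := by
  intro δ c₁ c₂ A₁ A₂
  have v1 : ∀ w, A₁.val w = (∑ i : Fin k, if w[i.val]? = some true then a i else 0) +
        (if k < w.length then (-T) else 0) := redA_val k a (-T) A₁ (fun _ _ => rfl) (fun _ _ => rfl) rfl
  have v2 : ∀ w, A₂.val w = (∑ i : Fin k, if w[i.val]? = some true then a i else 0) +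
        (if k < w.length then (-T + 1) else 0) := redA_val k a (-T + 1) A₂ (fun _ _ => rfl) (fun _ _ => rfl) rfl
  simp only [v1, v2]
  constructor
  · rintro h ⟨I, hI⟩
    have hw := h (List.ofFn (fun i : Fin (k + 1) => decide (∃ j ∈ I, j.val = i.val)))
      (by simp)
    have hs : (∑ i : Fin k, if (List.ofFn (fun i : Fin (k + 1) =>
        decide (∃ j ∈ I, j.val = i.val)))[i.val]? = some true then a i else 0) = T := by
      rw [← hI, ← Finset.sum_filter]
      congr 1
      ext i
      have : i.val < k + 1 := by omega
      rw [Finset.mem_filter, List.getElem?_ofFn, dif_pos this]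
      simp [Fin.val_inj]
    rw [hs] at hw
    simp at hw
  · intro h w _
    have hne : (∑ i : Fin k, if w[i.val]? = some true then a i else 0) ≠ T := by
      intro e
      exact h ⟨Finset.univ.filter (fun i => w[i.val]? = some true), by
        rw [Finset.sum_filter]; exact e⟩
    have hev : Even (∑ i : Fin k, if w[i.val]? = some true then a i else 0) := by
      apply Finset.even_sum
      intro i _
      split_ifs
      · exact ha i
      · exact Even.zero
    obtain ⟨m, hm⟩ := hev
    obtain ⟨n, hn⟩ := hT
    split_ifs
    · omega
    · rfl
end

section
/- Let A₁ = (Σ, Q₁, q₀₁, δ₁, c₁) and A₂ = (Σ, Q₂, q₀₂, δ₂, c₂) be DWAs over the same finite alphabet Σ, and let λ₁, λ₂ ∈ ℤ. Define the 2-dimensional ℤ-VASS V with states Q₁ × Q₂ ∪ {t} and the following labeled edges: for each (q, s) ∈ Q₁ × Q₂ and a ∈ Σ, an edge from (q, s) to (δ₁(q, a), δ₂(s, a)) labeled (c₁(q, a), c₂(s, a)); for each (q, s) ∈ Q₁ × Q₂, an edge from (q, s) to t labeled (−λ₁ + 1, −λ₂); and self-loops at t labeled (1, 0) and (0, −1).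 Then the configuration (t, (0, 0)) is reachable from the configuration ((q₀₁, q₀₂), (0, 0)) if and only if there exists a word w ∈ Σ* (with the convention A(ε) = 0) such that A₁(w) < λ₁ and A₂(w) ≥ λ₂. -/
/-- correctness of the reduction of PODWA (in)equivalence to ℤ-reachability in a
2-dimensional ℤ-VASS. The VASS state space is `(Q₁ × Q₂) ⊕ Unit`, with `Sum.inr ()` playing
the role of the sink state `t`; a configuration is a pair of a state and a vector in `ℤ²`,
and reachability is the reflexive-transitive closure of the step relation (counters may go
negative). -/
theorem podwa_equivalence_to_vass_reachability
    (A : Type) [Fintype A] (Q₁ Q₂ : Type) [Fintype Q₁] [Fintype Q₂]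
    (M₁ : DWA A Q₁) (M₂ : DWA A Q₂) (lam₁ lam₂ : ℤ) :
    let V := (Q₁ × Q₂) ⊕ Unit
    let step : V × ℤ × ℤ → V × ℤ × ℤ → Prop := fun p p' =>
      -- product edges, labeled by the pairs of weights of the two automata
      (∃ (q : Q₁) (s : Q₂) (x : A), p.1 = Sum.inl (q, s) ∧
        p' = (Sum.inl (M₁.δ q x, M₂.δ s x), p.2.1 + M₁.c q x, p.2.2 + M₂.c s x)) ∨
      -- edges to the sink `t`, labeled `(-λ₁ + 1, -λ₂)`
      (∃ (q : Q₁) (s : Q₂), p.1 = Sum.inl (q, s) ∧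
        p' = (Sum.inr (), p.2.1 + (-lam₁ + 1), p.2.2 + (-lam₂))) ∨
      -- self-loops at `t`, labeled `(1, 0)` and `(0, -1)`
      (p.1 = Sum.inr () ∧
        (p' = (Sum.inr (), p.2.1 + 1, p.2.2) ∨ p' = (Sum.inr (), p.2.1, p.2.2 + (-1))))
    (Relation.ReflTransGen step
        ((Sum.inl (M₁.init, M₂.init) : V), (0 : ℤ), (0 : ℤ))
        ((Sum.inr () : V), (0 : ℤ), (0 : ℤ)) ↔
      ∃ w : List A, M₁.val w < lam₁ ∧ lam₂ ≤ M₂.val w) := by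
  intro V step
  constructor
  · intro h
    have key : ∀ p : V × ℤ × ℤ, Relation.ReflTransGen step p
        ((Sum.inr () : V), (0 : ℤ), (0 : ℤ)) →
        (∀ q s, p.1 = Sum.inl (q, s) → ∃ w : List A,
          p.2.1 + M₁.valFrom q w < lam₁ ∧ lam₂ ≤ p.2.2 + M₂.valFrom s w) ∧
        (p.1 = Sum.inr () → p.2.1 ≤ 0 ∧ 0 ≤ p.2.2) := by
      intro p hp
      induction hp using Relation.ReflTransGen.head_induction_on with
      | refl => exact ⟨fun q s h => (by cases h), fun _ => ⟨le_refl _, le_refl _⟩⟩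
      | @head a b hab _ ih =>
        obtain ⟨v, x, y⟩ := a
        rcases hab with ⟨q, s, l, h1, rfl⟩ | ⟨q, s, h1, rfl⟩ | ⟨h1, h2⟩
        · dsimp only at h1
          subst h1
          refine ⟨fun q' s' h => ?_, fun h => by cases h⟩
          cases h
          obtain ⟨w, hw1, hw2⟩ := ih.1 _ _ rfl
          refine ⟨l :: w, ?_, ?_⟩ <;> simp only [DWA.valFrom] at * <;> linarith
        · dsimp only at h1
          subst h1
          refine ⟨fun q' s' h => ?_, fun h => by cases h⟩
          obtain ⟨hw1, hw2⟩ := ih.2 rfl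
          refine ⟨[], ?_, ?_⟩ <;> simp only [DWA.valFrom] at * <;> linarith
        · dsimp only at h1
          subst h1
          refine ⟨fun q' s' h => (by cases h), fun _ => ?_⟩
          rcases h2 with rfl | rfl
          · obtain ⟨hw1, hw2⟩ := ih.2 rfl
            constructor <;> simp only at * <;> linarith
          · obtain ⟨hw1, hw2⟩ := ih.2 rfl
            constructor <;> simp only at * <;> linarith
    obtain ⟨w, h1, h2⟩ := (key _ h).1 _ _ rfl
    refine ⟨w, ?_, ?_⟩ <;> simp only [DWA.val] at * <;> linarith
  · have sink2 : ∀ n : ℕ, Relation.ReflTransGen step ((Sum.inr () : V), (0 : ℤ), (n : ℤ))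
        ((Sum.inr () : V), (0 : ℤ), (0 : ℤ)) := by
      intro n
      induction n with
      | zero => exact .refl
      | succ n ih =>
        refine .head (Or.inr (Or.inr ⟨rfl, Or.inr ?_⟩)) ih
        simp
    have sink1 : ∀ m n : ℕ, Relation.ReflTransGen step ((Sum.inr () : V), (-m : ℤ), (n : ℤ))
        ((Sum.inr () : V), (0 : ℤ), (0 : ℤ)) := by
      intro m n
      induction m with
      | zero => simpa using sink2 n
      | succ m ih =>
        refine .head (Or.inr (Or.inr ⟨rfl, Or.inl ?_⟩)) ih
        simp
    have key : ∀ (w : List A) (q : Q₁) (s : Q₂) (x y : ℤ),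
        x + M₁.valFrom q w < lam₁ → lam₂ ≤ y + M₂.valFrom s w →
        Relation.ReflTransGen step ((Sum.inl (q, s) : V), x, y)
          ((Sum.inr () : V), (0 : ℤ), (0 : ℤ)) := by
      intro w
      induction w with
      | nil =>
        intro q s x y h1 h2
        simp only [DWA.valFrom] at h1 h2
        refine .head (Or.inr (Or.inl ⟨q, s, rfl, rfl⟩)) ?_
        obtain ⟨m, hm⟩ := Int.eq_ofNat_of_zero_le (a := -(x + (-lam₁ + 1))) (by linarith)
        obtain ⟨n, hn⟩ := Int.eq_ofNat_of_zero_le (a := y + -lam₂) (by linarith)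
        have hm' : x + (-lam₁ + 1) = -(m : ℤ) := by linarith
        dsimp only
        rw [hm', hn]
        exact sink1 m n
      | cons l w ih =>
        intro q s x y h1 h2
        simp only [DWA.valFrom] at h1 h2
        refine .head (Or.inl ⟨q, s, l, rfl, rfl⟩) (ih _ _ _ _ ?_ ?_) <;> dsimp only <;> linarith
    rintro ⟨w, h1, h2⟩
    exact key w _ _ _ _ (by simpa [DWA.val] using h1) (by simpa [DWA.val] using h2)
end

section
/- Let G = (V, E) be a loopless directed graph with edges enumerated E = {e_1, …, e_m}, where e_i = (v_i, u_i), and let k ≥ 1. Let A_G be the DWA over Σ_G = {e_i⁻, e_i⁺ : 1 ≤ i ≤ m} with states {q_0, q_f} ∪ {q_v : v ∈ V}, initial state q_0, and, for every edge e_i = (v, u): δ(q_0, e_i⁻) = q_v and δ(q_0, e_i⁺) = q_u, both with weight −3i − 1; δ(q_v, e_i⁻) = q_f with weight 3i and δ(q_v, e_i⁺) = q_f with weight 3i + 2; δ(q_u, e_i⁻) = q_f with weight 3i + 2 and δ(q_u, e_i⁺) = q_f with weight 3i; for every vertex x that is not an endpoint of e_j, δ(q_x, e_j⁻) = δ(q_x,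 e_j⁺) = q_f with weight 3j + 1; and δ(q_f, y) = q_f with weight 0 for every letter y. Then G admits a proper k-coloring (a function λ : V → {1, …, k} with λ(u) ≠ λ(v) for every edge (u, v) ∈ E) if and only if there exists a DWA B over Σ_G with at most k + 2 states, all of whose weights have absolute value at most 3m + 2, obtained from A_G by merging, such that for every nonempty word w over Σ_G, B(w) > 0 if and only if A_G(w) > 0. -/
/-- A state of the automaton `A_G`: the initial state `q0`, the sink `qf`,
or a state `qv v` for a vertex `v`. -/
inductive StG (V : Type) where
  | q0 : StG V
  | qf : StG V
  | qv : V → StG V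

/-- `B` is obtained from `M` by merging: there is a function `f`, surjective from the
reachable states of `M` onto the states of `B`, mapping the initial state to the initial
state and commuting with the transition functions on reachable states (the weights of `B`
are unconstrained). -/
def ObtainedByMerging {A Q₁ Q₂ : Type} (M : DWA A Q₁) (B : DWA A Q₂) : Prop :=
  ∃ f : Q₁ → Q₂,
    (∀ p : Q₂, ∃ q : Q₁, (∃ w : List A, M.run M.init w = q) ∧ f q = p) ∧
    f M.init = B.init ∧
    (∀ q : Q₁, (∃ w : List A, M.run M.init w = q) → ∀ x : A, B.δ (f q) x = f (M.δ q x))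

theorem DWA.restrict_aux {A Q₁ Q₂ : Type} [Fintype Q₂] (M : DWA A Q₁) (B' : DWA A Q₂)
    (f : Q₁ → Q₂) (h0 : f M.init = B'.init) (hδ : ∀ q x, B'.δ (f q) x = f (M.δ q x)) :
    ∃ (k' : ℕ) (B : DWA A (Fin k')), k' ≤ Fintype.card Q₂ ∧
      (∀ q x, ∃ q', B.c q x = B'.c q' x) ∧ ObtainedByMerging M B ∧
      (∀ w, B.val w = B'.val w) := by
  classical
  let S : Set Q₂ := {p | ∃ q, (∃ w, M.run M.init w = q) ∧ f q = p}
  have hreach : ∀ q, (∃ w, M.run M.init w = q) → ∀ x, ∃ w, M.run M.init w = M.δ q x := by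
    rintro q ⟨w, rfl⟩ x
    exact ⟨w ++ [x], by simp [DWA.run]⟩
  have hS : ∀ p ∈ S, ∀ x, B'.δ p x ∈ S := by
    rintro p ⟨q, hq, rfl⟩ x
    exact ⟨M.δ q x, hreach q hq x, (hδ q x).symm⟩
  have hi : B'.init ∈ S := ⟨M.init, ⟨[], rfl⟩, h0⟩
  let E : S ≃ Fin (Fintype.card S) := Fintype.equivFin S
  let B : DWA A (Fin (Fintype.card S)) :=
    ⟨E ⟨B'.init, hi⟩, fun p x => E ⟨B'.δ (E.symm p).1 x, hS _ (E.symm p).2 x⟩,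
      fun p x => B'.c (E.symm p).1 x⟩
  have hval : ∀ w p, B.valFrom p w = B'.valFrom (E.symm p).1 w := by
    intro w
    induction w with
    | nil => intro p; rfl
    | cons x w ih =>
      intro p
      simp only [DWA.valFrom, ih]
      simp [B]
  let g : Q₁ → Fin (Fintype.card S) := fun q => if h : f q ∈ S then E ⟨f q, h⟩ else B.init
  have hg : ∀ q (h : f q ∈ S), g q = E ⟨f q, h⟩ := fun q h => by simp [g, h]
  refine ⟨_, B, Fintype.card_subtype_le _, fun q x => ⟨_, rfl⟩, ⟨g, ?_, ?_, ?_⟩, ?_⟩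
  · intro p
    obtain ⟨q, hq, hp⟩ := (E.symm p).2
    refine ⟨q, hq, ?_⟩
    rw [hg q ⟨q, hq, rfl⟩, ← Equiv.eq_symm_apply]
    exact Subtype.ext hp
  · rw [hg M.init ⟨M.init, ⟨[], rfl⟩, rfl⟩]
    simp [B, h0]
  · intro q hq x
    rw [hg q ⟨q, hq, rfl⟩, hg _ ⟨_, hreach q hq x, rfl⟩]
    simp [B, hδ]
  · intro w
    simp [DWA.val, hval, B]

/-- correctness of the reduction from `k`-coloring to O-minimization by merging.
The graph has vertex set `V` and edges `e 0, …, e (m-1)` (the index `i : Fin m` represents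
the edge `e_{i+1}` of the paper, and `(i, false)`/`(i, true)` are the letters
`e_{i+1}⁻`/`e_{i+1}⁺`); the graph is loopless. `G` admits a proper `k`-coloring iff there is
a DWA `B` with at most `k + 2` states, all weights of absolute value at most `3m + 2`,
obtained from `A_G` by merging and observationally equivalent to `A_G`. -/
theorem coloring_iff_minimization_by_merging
    (V : Type) [Fintype V] [DecidableEq V] (m : ℕ) (e : Fin m → V × V)
    (hloop : ∀ i : Fin m, (e i).1 ≠ (e i).2) (k : ℕ) (hk : 1 ≤ k) :
    let δG : StG V → Fin m × Bool → StG V := fun q l =>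
      match q with
      | StG.q0 => StG.qv (if l.2 then (e l.1).2 else (e l.1).1)
      | _ => StG.qf
    let cG : StG V → Fin m × Bool → ℤ := fun q l =>
      match q with
      | StG.q0 => -3 * ((l.1 : ℤ) + 1) - 1
      | StG.qf => 0
      | StG.qv v =>
          if v = (e l.1).1 then
            (if l.2 then 3 * ((l.1 : ℤ) + 1) + 2 else 3 * ((l.1 : ℤ) + 1))
          else if v = (e l.1).2 then
            (if l.2 then 3 * ((l.1 : ℤ) + 1) else 3 * ((l.1 : ℤ) + 1) + 2)
          else 3 * ((l.1 : ℤ) + 1) + 1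
    let AG : DWA (Fin m × Bool) (StG V) := ⟨StG.q0, δG, cG⟩
    ((∃ coloring : V → Fin k, ∀ i : Fin m, coloring (e i).1 ≠ coloring (e i).2) ↔
      ∃ (k' : ℕ) (B : DWA (Fin m × Bool) (Fin k')),
        k' ≤ k + 2 ∧
        (∀ q x, |B.c q x| ≤ 3 * m + 2) ∧
        ObtainedByMerging AG B ∧
        (∀ w : List (Fin m × Bool), w ≠ [] → (0 < B.val w ↔ 0 < AG.val w))) := by
  intro δG cG AG
  have hAf : ∀ w, AG.valFrom StG.qf w = 0 := by
    intro w
    induction w with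
    | nil => rfl
    | cons x w ih =>
      have : AG.valFrom StG.qf (x :: w) = 0 + AG.valFrom StG.qf w := rfl
      rw [this, ih]; rfl
  have hA1 : ∀ x, AG.val [x] = cG StG.q0 x + 0 := fun x => rfl
  have hA2 : ∀ x y w, AG.val (x :: y :: w) =
      cG StG.q0 x + cG (StG.qv (if x.2 then (e x.1).2 else (e x.1).1)) y := by
    intro x y w
    have : AG.val (x :: y :: w) =
      cG StG.q0 x + (cG (StG.qv (if x.2 then (e x.1).2 else (e x.1).1)) y +
        AG.valFrom StG.qf w) := rfl
    rw [this, hAf, add_zero]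
  constructor
  · rintro ⟨col, hcol⟩
    let cB : Option (Option (Fin k)) → Fin m × Bool → ℤ := fun q l =>
      match q with
      | none => -3 * ((l.1 : ℤ) + 1) - 1
      | some none => 0
      | some (some v) =>
          if v = col (e l.1).1 then
            (if l.2 then 3 * ((l.1 : ℤ) + 1) + 2 else 3 * ((l.1 : ℤ) + 1))
          else if v = col (e l.1).2 then
            (if l.2 then 3 * ((l.1 : ℤ) + 1) else 3 * ((l.1 : ℤ) + 1) + 2)
          else 3 * ((l.1 : ℤ) + 1) + 1
    let dB : Option (Option (Fin k)) → Fin m × Bool → Option (Option (Fin k)) := fun q l =>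
      match q with
      | none => some (some (col (if l.2 then (e l.1).2 else (e l.1).1)))
      | _ => some none
    let B' : DWA (Fin m × Bool) (Option (Option (Fin k))) := ⟨none, dB, cB⟩
    let f : StG V → Option (Option (Fin k)) := fun q =>
      match q with
      | StG.q0 => none
      | StG.qf => some none
      | StG.qv v => some (some (col v))
    have hBf : ∀ w, B'.valFrom (some none) w = 0 := by
      intro w
      induction w with
      | nil => rfl
      | cons x w ih =>
        have : B'.valFrom (some none) (x :: w) = 0 + B'.valFrom (some none) w := rfl
        rw [this, ih]; rfl
    have hB2 : ∀ x y w, B'.val (x :: y :: w) =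
        cB none x + cB (some (some (col (if x.2 then (e x.1).2 else (e x.1).1)))) y := by
      intro x y w
      have : B'.val (x :: y :: w) =
        cB none x + (cB (some (some (col (if x.2 then (e x.1).2 else (e x.1).1)))) y +
          B'.valFrom (some none) w) := rfl
      rw [this, hBf, add_zero]
    obtain ⟨k', B, hk', hc, hm, hv⟩ := DWA.restrict_aux AG B' f rfl (by
      intro q x
      cases q <;> rfl)
    refine ⟨k', B, by simpa using hk', ?_, hm, ?_⟩
    · intro q x
      obtain ⟨q', hq'⟩ := hc q x
      rw [hq', abs_le]
      have := x.1.2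
      change _ ≤ cB q' x ∧ cB q' x ≤ _
      rcases q' with _ | _ | v <;> simp only [cB] <;> (try split_ifs) <;> omega
    · intro w hw
      rw [hv]
      rcases w with _ | ⟨x, _ | ⟨y, w⟩⟩
      · exact absurd rfl hw
      · rw [hA1]; rfl
      · rw [hA2, hB2]
        obtain ⟨i, b⟩ := x
        obtain ⟨j, b'⟩ := y
        have hj := hcol j
        have hlj := hloop j
        have key : ∀ v, v = (e i).1 ∨ v = (e i).2 →
            (0 < cB none (i, b) + cB (some (some (col v))) (j, b') ↔
              0 < cG StG.q0 (i, b) + cG (StG.qv v) (j, b')) := by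
          intro v hvi
          simp only [cB, cG]
          by_cases h1 : v = (e j).1
          · simp [h1]
          · by_cases h2 : v = (e j).2
            · simp [h2, hj.symm, hlj.symm]
            · have hij : (i : ℕ) ≠ j := by
                intro h
                have h := Fin.ext h
                subst h
                tauto
              simp only [h1, h2, if_false]
              split_ifs <;> omega
        apply key
        cases b <;> simp
  · rintro ⟨k', B, hk', -, ⟨f, -, hf0, hfd⟩, hv⟩
    have r0 : ∃ w, AG.run AG.init w = StG.q0 := ⟨[], rfl⟩
    rcases Nat.eq_zero_or_pos m with hm | hm
    · subst hm
      exact ⟨fun _ => ⟨0, hk⟩, fun i => i.elim0⟩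
    have rf : ∃ w, AG.run AG.init w = StG.qf := ⟨[(⟨0, hm⟩, true), (⟨0, hm⟩, true)], rfl⟩
    have rv : ∀ x : Fin m × Bool, ∃ w, AG.run AG.init w =
      StG.qv (if x.2 then (e x.1).2 else (e x.1).1) := fun x => ⟨[x], rfl⟩
    have hd0 : ∀ x, B.δ (f StG.q0) x = f (StG.qv (if x.2 then (e x.1).2 else (e x.1).1)) :=
      fun x => hfd _ r0 x
    have hdf : ∀ x, B.δ (f StG.qf) x = f StG.qf := fun x => hfd _ rf x
    have hdv : ∀ x y : Fin m × Bool,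
        B.δ (f (StG.qv (if x.2 then (e x.1).2 else (e x.1).1))) y = f StG.qf :=
      fun x y => hfd _ (rv x) y
    have hB2 : ∀ x y w, B.val (x :: y :: w) = B.c (f StG.q0) x +
        (B.c (f (StG.qv (if x.2 then (e x.1).2 else (e x.1).1))) y +
          B.valFrom (f StG.qf) w) := by
      intro x y w
      have h0 : B.init = f StG.q0 := hf0.symm
      simp only [DWA.val, DWA.valFrom, h0, hd0, hdv]
    have hpos : ∀ i b w, 0 < B.val ((i, b) :: (i, !b) :: w) := by
      intro i b w
      rw [hv _ (by simp), hA2]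
      have := hloop i
      cases b <;> simp [cG, this.symm]
      all_goals omega
    have hneg : ∀ i b w, B.val ((i, b) :: (i, b) :: w) ≤ 0 := by
      intro i b w
      rw [← not_lt, hv _ (by simp), hA2]
      have := hloop i
      cases b <;> simp [cG, this.symm]
      all_goals omega
    have hrep : ∀ z n, B.valFrom (f StG.qf) (List.replicate n z) = n * B.c (f StG.qf) z := by
      intro z n
      induction n with
      | zero => simp [DWA.valFrom]
      | succ n ih =>
        simp only [List.replicate_succ, DWA.valFrom, hdf, ih]
        push_cast; ring
    have hzero : ∀ z, B.c (f StG.qf) z = 0 := by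
      intro z
      let i : Fin m := ⟨0, hm⟩
      by_contra hne
      rcases lt_or_gt_of_ne hne with h | h
      · have h1 := hpos i true (List.replicate (B.val [(i, true), (i, false)]).toNat z)
        have h2 := hpos i true []
        simp only [Bool.not_true] at h1 h2
        generalize hN : (B.val [(i, true), (i, false)]) = N at *
        rw [hB2] at h1 hN
        rw [hrep, Int.toNat_of_nonneg h2.le] at h1
        simp only [DWA.valFrom, if_true] at hN h1
        nlinarith
      · have h1 := hneg i true
          (List.replicate (1 - B.val [(i, true), (i, true)]).toNat z)
        have h2 := hneg i true []
        generalize hN : (B.val [(i, true), (i, true)]) = N at *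
        rw [hB2] at h1 hN
        rw [hrep, Int.toNat_of_nonneg (by omega)] at h1
        simp only [DWA.valFrom, if_true] at hN h1
        nlinarith
    have hvf : ∀ x : Fin m × Bool,
        f (StG.qv (if x.2 then (e x.1).2 else (e x.1).1)) ≠ f StG.qf := by
      rintro ⟨i, b⟩ h
      have h1 := hpos i b []
      have h2 := hneg i b []
      rw [hB2, h, hzero] at h1 h2
      omega
    have h0f : f StG.q0 ≠ f StG.qf := by
      intro h
      have h1 := hd0 (⟨0, hm⟩, true)
      rw [h, hdf] at h1
      exact hvf _ h1.symm
    have hv0 : ∀ x : Fin m × Bool,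
        f (StG.qv (if x.2 then (e x.1).2 else (e x.1).1)) ≠ f StG.q0 := by
      intro x h
      have h1 := hdv x x
      rw [h, hd0] at h1
      exact hvf _ h1
    have hvu : ∀ i, f (StG.qv (e i).1) ≠ f (StG.qv (e i).2) := by
      intro i h
      have h1 := hpos i true []
      have h2 := hneg i true []
      have h3 := hpos i false []
      have h4 := hneg i false []
      rw [hB2] at h1 h2 h3 h4
      simp [h] at h1 h2 h3 h4
      omega
    let T : Finset (Fin k') := Finset.univ \ {f StG.q0, f StG.qf}
    have hT : Fintype.card T ≤ Fintype.card (Fin k) := by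
      rw [Fintype.card_coe, Finset.card_sdiff_of_subset (Finset.subset_univ _),
        Finset.card_pair h0f]
      simp
      omega
    obtain ⟨emb⟩ := Function.Embedding.nonempty_of_card_le hT
    have hm1 : ∀ x : Fin m × Bool,
        f (StG.qv (if x.2 then (e x.1).2 else (e x.1).1)) ∈ T := by
      intro x
      simp only [T, Finset.mem_sdiff, Finset.mem_univ, true_and, Finset.mem_insert,
        Finset.mem_singleton, not_or]
      exact ⟨hv0 x, hvf x⟩
    refine ⟨fun v => if h : f (StG.qv v) ∈ T then emb ⟨_, h⟩ else ⟨0, hk⟩, ?_⟩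
    intro i
    have a1 : f (StG.qv (e i).1) ∈ T := by simpa using hm1 (i, false)
    have a2 : f (StG.qv (e i).2) ∈ T := by simpa using hm1 (i, true)
    simp only [a1, a2, dif_pos]
    intro h
    exact hvu i (congrArg Subtype.val (emb.injective h))
end

section
/- Let φ be a 3-CNF formula with variables p_1, …, p_m and clauses C_1, …, C_r, each clause consisting of three literals (a literal is either a variable p_i or its negation ¬p_i). Then φ is satisfiable if and only if there exist integers v_q, v_1, …, v_m, v̄_1, …, v̄_m such that: 0 ≤ v_q ≤ 1 and v_q + v_q ≥ 2; for every i, 0 ≤ v_i ≤ 1, 0 ≤ v̄_i ≤ 1, 0 ≤ v_i + v̄_i ≤ 1, and v_i + v̄_i + v_q ≥ 2; and for every clause C_j with literals x, y, z, val(x) + val(y) + val(z) + v_q ≥ 2, where val(p_i) = v_i and val(¬p_i) = v̄_i. -/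
/-- correctness of the reduction from 3-SAT used for NP-hardness of sample
fitting. A literal is a pair `(i, b) : Fin m × Bool` (`b = true` for the variable `p_{i+1}`,
`b = false` for its negation); a clause is a triple of literals. The formula `φ` with clauses
`C 0, …, C (r-1)` is satisfiable iff there are integers `vq, v_1, …, v_m, v̄_1, …, v̄_m`
satisfying the listed constraints. -/
theorem three_sat_reduction_correct (m r : ℕ)
    (C : Fin r → (Fin m × Bool) × (Fin m × Bool) × (Fin m × Bool)) :
    ((∃ σ : Fin m → Bool,
        ∀ j : Fin r,
          (σ (C j).1.1 = (C j).1.2) ∨ (σ (C j).2.1.1 = (C j).2.1.2) ∨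
            (σ (C j).2.2.1 = (C j).2.2.2)) ↔
      ∃ (vq : ℤ) (v vbar : Fin m → ℤ),
        let litVal : Fin m × Bool → ℤ := fun l => if l.2 then v l.1 else vbar l.1
        (0 ≤ vq ∧ vq ≤ 1 ∧ 2 ≤ vq + vq) ∧
        (∀ i : Fin m,
          0 ≤ v i ∧ v i ≤ 1 ∧ 0 ≤ vbar i ∧ vbar i ≤ 1 ∧
          0 ≤ v i + vbar i ∧ v i + vbar i ≤ 1 ∧ 2 ≤ v i + vbar i + vq) ∧
        (∀ j : Fin r,
          2 ≤ litVal (C j).1 + litVal (C j).2.1 + litVal (C j).2.2 + vq)) := by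
  constructor
  · rintro ⟨σ, h⟩
    refine ⟨1, fun i => if σ i = true then 1 else 0, fun i => if σ i = true then 0 else 1, ?_⟩
    intro litVal
    have key : ∀ l : Fin m × Bool, litVal l = if σ l.1 = l.2 then 1 else 0 := by
      rintro ⟨i, b⟩
      cases b <;> cases hs : σ i <;> simp [litVal, hs]
    refine ⟨by norm_num, ?_, ?_⟩
    · intro i
      cases hs : σ i <;> simp [hs]
    · intro j
      have hj := h j
      rw [key, key, key]
      split_ifs <;> first | omega | tauto
  · rintro ⟨vq, v, vbar, hq, hv, hc⟩
    refine ⟨fun i => decide (v i = 1), fun j => ?_⟩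
    have key : ∀ l : Fin m × Bool, ¬ (decide (v l.1 = 1) = l.2) →
        (if l.2 then v l.1 else vbar l.1) = 0 := by
      rintro ⟨i, b⟩ hne
      have hi := hv i
      cases b <;> simp at hne ⊢ <;> omega
    by_contra hcon
    simp only [not_or] at hcon
    have hj := hc j
    simp only [] at hj
    rw [key _ hcon.1, key _ hcon.2.1, key _ hcon.2.2] at hj
    omega
end

section
/- For every DWA A over a finite alphabet Σ there exists a DWA B over Σ (with at most one more state than A) such that for every nonempty word w, B(w) > 0 if and only if A(w) ≤ 0. Hence the class of binary-PODWA-recognizable languages is closed under complement (within the set of nonempty words). -/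
/-- The complement automaton: a fresh initial state adds `1` on the first letter,
and all weights are negated. -/
def DWA.compl {A Q : Type} (M : DWA A Q) : DWA A (Option Q) where
  init := none
  δ q a := some (M.δ (q.getD M.init) a)
  c q a := match q with
    | none => 1 - M.c M.init a
    | some q => - M.c q a

theorem DWA.compl_valFrom_some {A Q : Type} (M : DWA A Q) (w : List A) (q : Q) :
    M.compl.valFrom (some q) w = - M.valFrom q w := by
  induction w generalizing q with
  | nil => simp [DWA.valFrom]
  | cons x w ih =>
    have h := ih (M.δ q x)
    change - M.c q x + M.compl.valFrom (some (M.δ q x)) w = -(M.c q x + M.valFrom (M.δ q x) w)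
    rw [h]; ring

/-- for every DWA `A` there is a DWA `B` with at most one more state such that,
for every nonempty word `w`, `B(w) > 0 ↔ A(w) ≤ 0`; hence the class of
binary-PODWA-recognizable languages is closed under complement (within nonempty words). -/
theorem binary_podwa_closed_under_complement
    (A : Type) (Q : Type) [Fintype Q] (M : DWA A Q) :
    ∃ (Q' : Type) (inst : Fintype Q') (B : DWA A Q'),
      @Fintype.card Q' inst ≤ Fintype.card Q + 1 ∧
      ∀ w : List A, w ≠ [] → (0 < B.val w ↔ M.val w ≤ 0) := by
  refine ⟨Option Q, inferInstance, M.compl, by simp, ?_⟩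
  intro w hw
  cases w with
  | nil => exact absurd rfl hw
  | cons x w =>
    have h := M.compl_valFrom_some w (M.δ M.init x)
    change 0 < 1 - M.c M.init x + M.compl.valFrom (some (M.δ M.init x)) w ↔
      M.c M.init x + M.valFrom (M.δ M.init x) w ≤ 0
    rw [h]; omega
end

section
/- Every regular language L over a finite alphabet Σ with ε ∉ L is binary-PODWA-recognizable: for every deterministic finite automaton M with finitely many states accepting L, there exists a DWA A over Σ such that for every nonempty word w, A(w) > 0 if and only if M accepts w. -/
/-- every regular language not containing the empty word is
binary-PODWA-recognizable: for every DFA `M` (with finitely many states) not accepting `ε`,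
there is a DWA `B` whose value is positive exactly on the nonempty words accepted by `M`. -/
theorem regular_implies_binary_podwa_recognizable
    (A : Type) [Fintype A] (σ : Type) [Fintype σ] (M : DFA A σ)
    (hε : [] ∉ M.accepts) :
    ∃ (Q : Type) (_ : Fintype Q) (B : DWA A Q),
      ∀ w : List A, w ≠ [] → (0 < B.val w ↔ w ∈ M.accepts) := by
  classical
  let f : σ → ℤ := fun q => if q ∈ M.accept then 1 else 0
  let B : DWA A σ := ⟨M.start, M.step, fun q x => f (M.step q x) - f q⟩
  have key : ∀ (w : List A) (q : σ), B.valFrom q w = f (M.evalFrom q w) - f q := by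
    intro w
    induction w with
    | nil => intro q; simp [DWA.valFrom]
    | cons x w ih =>
      intro q
      have h : B.valFrom q (x :: w) =
          (f (M.step q x) - f q) + B.valFrom (M.step q x) w := rfl
      rw [h, ih, DFA.evalFrom_cons]
      ring
  refine ⟨σ, inferInstance, B, fun w _ => ?_⟩
  have h0 : M.start ∉ M.accept := hε
  have h1 : B.val w = f (M.eval w) - f M.start := key w M.start
  have h2 : f M.start = 0 := if_neg h0
  rw [h1, h2, DFA.mem_accepts]
  by_cases h : M.eval w ∈ M.accept <;> simp [f, h]
end

section
/- Let Σ be a finite nonempty alphabet and f : Σ* \ {ε} → ℤ. Define the relation ≡_f on nonempty words by: w ≡_f v if and only if for all u ∈ Σ*, f(wu) − f(w) = f(vu) − f(v). Then there exists a DWA A over Σ with f(w) = A(w) for every nonempty word w if and only if ≡_f has finitely many equivalence classes. -/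
theorem DWA.valFrom_append {A Q : Type} (M : DWA A Q) (w u : List A) (q : Q) :
    M.valFrom q (w ++ u) = M.valFrom q w + M.valFrom (M.run q w) u := by
  induction w generalizing q with
  | nil => simp [DWA.valFrom, DWA.run]
  | cons x w ih =>
    have h := ih (M.δ q x)
    simp only [DWA.run] at h
    simp only [List.cons_append, DWA.valFrom, DWA.run, List.foldl_cons, h]
    ring

/-- Myhill–Nerode counterpart for DWA: a function `f` on nonempty words is
computed by some (finite-state) DWA iff the right congruence `≡_f`, defined on nonempty words
by `w ≡_f v ↔ ∀ u, f(wu) - f(w) = f(vu) - f(v)`, has finitely many equivalence classes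
(expressed by the existence of a finite set of representatives meeting every class). -/
theorem dwa_myhill_nerode (A : Type) [Fintype A] (f : List A → ℤ) :
    let rel : {w : List A // w ≠ []} → {w : List A // w ≠ []} → Prop := fun w v =>
      ∀ u : List A, f (w.val ++ u) - f w.val = f (v.val ++ u) - f v.val
    ((∃ (Q : Type) (_ : Fintype Q) (M : DWA A Q),
        ∀ w : List A, w ≠ [] → M.val w = f w) ↔
      ∃ S : Finset {w : List A // w ≠ []}, ∀ w : {w : List A // w ≠ []}, ∃ v ∈ S, rel w v) := by
  intro rel
  classical
  constructor
  · rintro ⟨Q, _, M, hM⟩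
    let g : {w : List A // w ≠ []} → Q := fun w => M.run M.init w.val
    have hr : ∀ q : Set.range g, ∃ w, g w = q.1 := fun q => q.2
    choose r hr using hr
    haveI : Fintype (Set.range g) := Fintype.ofFinite _
    refine ⟨Finset.univ.image r, fun w => ⟨r ⟨g w, w, rfl⟩, by simp, ?_⟩⟩
    have key : ∀ (w : {w : List A // w ≠ []}) (u : List A),
        f (w.val ++ u) - f w.val = M.valFrom (g w) u := by
      intro w u
      rw [← hM _ w.2, ← hM (w.val ++ u) (by simp [w.2])]
      simp only [DWA.val, DWA.valFrom_append, g]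
      ring
    intro u
    rw [key, key, hr]
  · rintro ⟨S, hS⟩
    choose r hrS hr using hS
    let ap : List A → A → {w : List A // w ≠ []} := fun w x => ⟨w ++ [x], by simp⟩
    let M : DWA A (Option S) :=
      { init := none
        δ := fun q x => match q with
          | none => some ⟨r (ap [] x), hrS _⟩
          | some s => some ⟨r (ap s.1.1 x), hrS _⟩
        c := fun q x => match q with
          | none => f [x]
          | some s => f (s.1.1 ++ [x]) - f s.1.1 }
    have key : ∀ (u : List A) (s : S) (w : {w : List A // w ≠ []}), rel w s.1 →
        M.valFrom (some s) u = f (w.val ++ u) - f w.val := by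
      intro u
      induction u with
      | nil => intro s w _; simp [DWA.valFrom]
      | cons x u ih =>
        intro s w h
        have h2 : rel (ap w.1 x) (r (ap s.1.1 x)) := by
          intro v
          rw [← hr (ap s.1.1 x) v]
          have h3 := h (x :: v)
          have h4 := h [x]
          simp only [ap, List.append_assoc, List.singleton_append]
          linarith
        have h5 := ih ⟨r (ap s.1.1 x), hrS _⟩ (ap w.1 x) h2
        have h4 := h [x]
        change (f (s.1.1 ++ [x]) - f s.1.1) +
          M.valFrom (some ⟨r (ap s.1.1 x), hrS _⟩) u = _
        rw [h5]
        simp only [ap, List.append_assoc, List.singleton_append]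
        linarith
    refine ⟨Option S, inferInstance, M, ?_⟩
    intro w hw
    cases w with
    | nil => exact absurd rfl hw
    | cons x u =>
      change f [x] + M.valFrom (some ⟨r (ap [] x), hrS _⟩) u = _
      rw [key u _ (ap [] x) (hr _)]
      simp [ap]
end

section
/- Let Σ be a finite nonempty alphabet, let S be a finite set of pairwise-disjoint nonempty integer intervals covering ℤ, let W be a finite set of nonempty words over Σ, and let g : W → S. Then there exists a DWA A over Σ such that for every w ∈ W, the value A(w) belongs to the interval g(w). In particular, every finite sample assigning to each word a single observation interval is consistent with some PODWA. -/
/-- Tree automaton: states are words of length at most `N`. -/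
noncomputable def treeDWA {A : Type} (f : List A → ℤ) (N : ℕ) :
    DWA A {l : List A // l.length ≤ N} where
  init := ⟨[], Nat.zero_le _⟩
  δ l x := if h : (l.1 ++ [x]).length ≤ N then ⟨l.1 ++ [x], h⟩ else l
  c l x := f (l.1 ++ [x]) - f l.1

theorem treeDWA_valFrom {A : Type} (f : List A → ℤ) (N : ℕ) (w : List A) :
    ∀ l : {l : List A // l.length ≤ N}, l.1.length + w.length ≤ N →
      (treeDWA f N).valFrom l w = f (l.1 ++ w) - f l.1 := by
  induction w with
  | nil => intro l _; simp [DWA.valFrom]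
  | cons x w ih =>
    intro l hl
    have h : (l.1 ++ [x]).length ≤ N := by
      simp at hl ⊢; omega
    have hδ : (treeDWA f N).δ l x = ⟨l.1 ++ [x], h⟩ := dif_pos h
    rw [DWA.valFrom, hδ, ih]
    · simp [treeDWA]
    · simp at hl ⊢; omega

/-- every finite sample is consistent with some PODWA. Given a finite set `S`
of pairwise-disjoint nonempty integer intervals covering `ℤ` (intervals are modelled as
nonempty order-connected subsets of `ℤ`), a finite set `W` of nonempty words, and an
assignment `g` of an interval of `S` to each word of `W`, there is a (finite-state) DWA `M`
whose value on each `w ∈ W` lies in the interval `g w`. -/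
theorem sample_fitting_always_possible
    (A : Type) [Fintype A] [Nonempty A]
    (S : Finset (Set ℤ))
    (hne : ∀ s ∈ S, s.Nonempty)
    (hconn : ∀ s ∈ S, s.OrdConnected)
    (hdisj : ∀ s ∈ S, ∀ t ∈ S, s ≠ t → s ∩ t = ∅)
    (hcover : ⋃ s ∈ S, s = Set.univ)
    (W : Finset (List A)) (hW : ∀ w ∈ W, w ≠ [])
    (g : List A → Set ℤ) (hg : ∀ w ∈ W, g w ∈ S) :
    ∃ (Q : Type) (_ : Fintype Q) (M : DWA A Q),
      ∀ w ∈ W, M.val w ∈ g w := by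
  classical
  have hex : ∀ w, ∃ z : ℤ, w ∈ W → z ∈ g w := fun w => by
    by_cases h : w ∈ W
    · obtain ⟨z, hz⟩ := hne _ (hg w h)
      exact ⟨z, fun _ => hz⟩
    · exact ⟨0, fun h' => absurd h' h⟩
  choose f hf using hex
  let f' : List A → ℤ := fun w => if w = [] then 0 else f w
  let N := W.sup List.length
  refine ⟨{l : List A // l.length ≤ N}, (List.finite_length_le A N).fintype,
    treeDWA f' N, fun w hw => ?_⟩
  have hlen : w.length ≤ N := Finset.le_sup (f := List.length) hw
  have hv : (treeDWA f' N).val w = f w := by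
    have := treeDWA_valFrom f' N w ⟨[], Nat.zero_le _⟩ (by simpa using hlen)
    exact this.trans (by simp [f', hW w hw])
  rw [hv]
  exact hf w hw
end
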